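/- Let N ≥ 1, let E = ℂ^N with the ℓ² inner product (EuclideanSpace ℂ (Fin N)), let λ : Fin N → ℝ be nonnegative and monotone nondecreasing, let (ψ_k)_{k ∈ Fin N} be an orthonormal basis of E, and let ψ ∈ E be a unit vector with coefficients c_k = ⟨ψ_k, ψ⟩. Fix K ∈ ℕ, Δτ > 0, δ ∈ [0,1), and an index m ∈ Fin N such that Σ_{j ≤ m} |c_j|² ≥ 1 − δ. Then ‖ Σ_k ( (cos(√(2Δτ λ_k)))^K − exp(−K Δτ λ_k) ) c_k ψ_k ‖² ≤ (4K²/9)·(Δτ)⁴ · Σ_{k ≤ m} λ_k⁴ |c_k|² + 4δ. -/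

import Mathlib

open Finset

/-!
In the eigenbasis both evolutions act by multipliers, so the squared error is
`∑ |a k|² |c k|²` with `a k = cos (√(2y)) ^ K - exp (-(K * y))` and `y = Δτ * λ k`. On the captured
indices, `cos (√(2y))` and `exp (-y)` agree to first order in `y`, and raising two numbers of
`[-1, 1]` to the power `K` multiplies their distance by at most `K`. On the remaining indices
`|a k| ≤ 2`, and by Bessel's inequality these indices carry weight at most `δ`.
-/

section Multiplier

open Real

theorem cos_le_one_sub_sq_div_two_add_pow_four_div (x : ℝ) :
    cos x ≤ 1 - x ^ 2 / 2 + x ^ 4 / 24 := by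
  set t := x / 2 with ht
  have half_angle : cos x = 1 - 2 * sin t ^ 2 := by
    rw [sin_sq_eq_half_sub, ht, mul_div_cancel₀ x two_ne_zero]; ring
  have sq_sub_sin_sq : t ^ 2 - sin t ^ 2 ≤ t ^ 4 / 3 :=
    calc t ^ 2 - sin t ^ 2 ≤ |t ^ 2 - sin t ^ 2| := le_abs_self _
      _ = |t - sin t| * |t + sin t| := by rw [← abs_mul]; ring_nf
      _ ≤ |t| ^ 3 / 6 * (|t| + |t|) := by
        gcongr
        · exact abs_sub_sin_le t
        · exact (abs_add_le _ _).trans (add_le_add le_rfl abs_sin_le_abs)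
      _ = |t| ^ 4 / 3 := by ring
      _ = t ^ 4 / 3 := by rw [Even.pow_abs (by decide)]
  calc cos x = 1 - 2 * t ^ 2 + 2 * (t ^ 2 - sin t ^ 2) := by rw [half_angle]; ring
    _ ≤ 1 - 2 * t ^ 2 + 2 * (t ^ 4 / 3) := by gcongr
    _ = 1 - x ^ 2 / 2 + x ^ 4 / 24 := by rw [ht]; ring

theorem exp_neg_le_one_sub_add_sq_div_two {y : ℝ} (hy : 0 ≤ y) :
    exp (-y) ≤ 1 - y + y ^ 2 / 2 := by
  have quadratic_pos : 0 < 1 + y + y ^ 2 / 2 := by positivity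
  calc exp (-y) = (exp y)⁻¹ := exp_neg y
    _ ≤ (1 + y + y ^ 2 / 2)⁻¹ := inv_anti₀ quadratic_pos (quadratic_le_exp_of_nonneg hy)
    _ ≤ 1 - y + y ^ 2 / 2 := by
      -- `(1 + y²/2 - y) (1 + y²/2 + y) = 1 + y⁴/4`
      rw [inv_le_iff_one_le_mul₀ quadratic_pos]
      linear_combination (by positivity : 0 ≤ y ^ 4 / 4)

theorem abs_cos_sqrt_sub_exp_neg_le {y : ℝ} (hy : 0 ≤ y) :
    |cos (√(2 * y)) - exp (-y)| ≤ y ^ 2 / 2 := by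
  have sq_sqrt : √(2 * y) ^ 2 = 2 * y := Real.sq_sqrt (by positivity)
  have cos_lower : 1 - y ≤ cos (√(2 * y)) := by
    linarith [one_sub_sq_div_two_le_cos (x := √(2 * y))]
  have cos_upper : cos (√(2 * y)) ≤ 1 - y + y ^ 2 / 6 :=
    calc cos (√(2 * y)) ≤ 1 - √(2 * y) ^ 2 / 2 + (√(2 * y) ^ 2) ^ 2 / 24 := by
          rw [← pow_mul]; exact cos_le_one_sub_sq_div_two_add_pow_four_div _
      _ = 1 - y + y ^ 2 / 6 := by rw [sq_sqrt]; ring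
  have exp_lower : 1 - y ≤ exp (-y) := one_sub_le_exp_neg y
  have exp_upper : exp (-y) ≤ 1 - y + y ^ 2 / 2 := exp_neg_le_one_sub_add_sq_div_two hy
  rw [abs_le]
  constructor <;> linarith [sq_nonneg y]

theorem abs_pow_sub_pow_le_of_abs_le_one {R : Type*} [CommRing R] [LinearOrder R]
    [IsOrderedRing R] {a b : R} (ha : |a| ≤ 1) (hb : |b| ≤ 1) (n : ℕ) :
    |a ^ n - b ^ n| ≤ n * |a - b| :=
  calc |a ^ n - b ^ n| ≤ |a - b| * n * max |a| |b| ^ (n - 1) := abs_pow_sub_pow_le ..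
    _ ≤ |a - b| * n * 1 := by
      gcongr
      exact pow_le_one₀ (le_max_of_le_left (abs_nonneg a)) (max_le ha hb)
    _ = n * |a - b| := by ring

theorem abs_cos_sqrt_pow_sub_exp_neg_le {y : ℝ} (hy : 0 ≤ y) (K : ℕ) :
    |cos (√(2 * y)) ^ K - exp (-(K * y))| ≤ K * (y ^ 2 / 2) := by
  have abs_exp_le : |exp (-y)| ≤ 1 := by simpa using hy
  calc |cos (√(2 * y)) ^ K - exp (-(K * y))| = |cos (√(2 * y)) ^ K - exp (-y) ^ K| := by
        rw [← exp_nat_mul, mul_neg]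
    _ ≤ K * |cos (√(2 * y)) - exp (-y)| :=
      abs_pow_sub_pow_le_of_abs_le_one (abs_cos_le_one _) abs_exp_le K
    _ ≤ K * (y ^ 2 / 2) := by gcongr; exact abs_cos_sqrt_sub_exp_neg_le hy

theorem abs_cos_pow_sub_exp_neg_le_two (x : ℝ) (K : ℕ) {z : ℝ} (hz : 0 ≤ z) :
    |cos x ^ K - exp (-z)| ≤ 2 :=
  calc |cos x ^ K - exp (-z)| ≤ |cos x ^ K| + |exp (-z)| := abs_sub _ _
    _ ≤ 1 + 1 := by
      gcongr
      · rw [abs_pow]; exact pow_le_one₀ (abs_nonneg _) (abs_cos_le_one x)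
      · simpa using hz
    _ = 2 := one_add_one_eq_two

end Multiplier

section Orthonormal

variable {𝕜 E ι : Type*} [RCLike 𝕜] [SeminormedAddCommGroup E] [InnerProductSpace 𝕜 E]
  {v : ι → E}

theorem norm_sq_sum_smul_of_orthonormal (hv : Orthonormal 𝕜 v) (a : ι → 𝕜) (t : Finset ι) :
    ‖∑ i ∈ t, a i • v i‖ ^ 2 = ∑ i ∈ t, ‖a i‖ ^ 2 := by
  simpa using hv.orthogonalFamily.norm_sum a t

theorem norm_sq_sum_mul_inner_smul_le (hv : Orthonormal 𝕜 v) (x : E) (a : ι → 𝕜)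
    (s t : Finset ι) {B : ℝ} (hB : ∀ i ∉ s, ‖a i‖ ≤ B) :
    ‖∑ i ∈ t, (a i * inner 𝕜 (v i) x) • v i‖ ^ 2 ≤
      ∑ i ∈ s, ‖a i‖ ^ 2 * ‖inner 𝕜 (v i) x‖ ^ 2
        + B ^ 2 * (‖x‖ ^ 2 - ∑ i ∈ s, ‖inner 𝕜 (v i) x‖ ^ 2) := by
  classical
  have tail_le : ∑ i ∈ t \ s, ‖inner 𝕜 (v i) x‖ ^ 2 ≤
      ‖x‖ ^ 2 - ∑ i ∈ s, ‖inner 𝕜 (v i) x‖ ^ 2 := by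
    rw [le_sub_iff_add_le, ← sum_union sdiff_disjoint]
    exact hv.sum_inner_products_le x
  rw [norm_sq_sum_smul_of_orthonormal hv, ← sum_inter_add_sum_sdiff t s]
  simp only [norm_mul, mul_pow]
  gcongr ?_ + ?_
  · exact sum_le_sum_of_subset_of_nonneg inter_subset_right fun i _ _ ↦ by positivity
  · calc ∑ i ∈ t \ s, ‖a i‖ ^ 2 * ‖inner 𝕜 (v i) x‖ ^ 2
        ≤ ∑ i ∈ t \ s, B ^ 2 * ‖inner 𝕜 (v i) x‖ ^ 2 := by
          gcongr with i hi
          exact hB i (mem_sdiff.mp hi).2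
      _ = B ^ 2 * ∑ i ∈ t \ s, ‖inner 𝕜 (v i) x‖ ^ 2 := (mul_sum ..).symm
      _ ≤ _ := by gcongr

theorem stmt_5_general (hv : Orthonormal 𝕜 v) {lam : ι → ℝ} (hlam : ∀ k, 0 ≤ lam k) (ψ : E)
    (K : ℕ) {Δτ : ℝ} (hΔτ : 0 ≤ Δτ) {δ : ℝ} {s : Finset ι}
    (hs : ‖ψ‖ ^ 2 - δ ≤ ∑ k ∈ s, ‖inner 𝕜 (v k) ψ‖ ^ 2) (t : Finset ι) :
    ‖∑ k ∈ t, (((Real.cos (√(2 * Δτ * lam k)) ^ K - Real.exp (-(K * Δτ * lam k)) : ℝ) : 𝕜)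
        * inner 𝕜 (v k) ψ) • v k‖ ^ 2
      ≤ (K : ℝ) ^ 2 / 4 * Δτ ^ 4 * ∑ k ∈ s, lam k ^ 4 * ‖inner 𝕜 (v k) ψ‖ ^ 2 + 4 * δ := by
  set a : ι → ℝ := fun k ↦ Real.cos (√(2 * Δτ * lam k)) ^ K - Real.exp (-(K * Δτ * lam k))
    with ha
  have a_le (k : ι) : |a k| ≤ K * ((Δτ * lam k) ^ 2 / 2) := by
    simpa only [ha, mul_assoc] using
      abs_cos_sqrt_pow_sub_exp_neg_le (mul_nonneg hΔτ (hlam k)) K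
  have a_le_two (k : ι) : |a k| ≤ 2 :=
    abs_cos_pow_sub_exp_neg_le_two _ K (by have := hlam k; positivity)
  calc ‖∑ k ∈ t, ((a k : 𝕜) * inner 𝕜 (v k) ψ) • v k‖ ^ 2
      ≤ ∑ k ∈ s, |a k| ^ 2 * ‖inner 𝕜 (v k) ψ‖ ^ 2
          + 2 ^ 2 * (‖ψ‖ ^ 2 - ∑ k ∈ s, ‖inner 𝕜 (v k) ψ‖ ^ 2) := by
        simpa only [RCLike.norm_ofReal] using
          norm_sq_sum_mul_inner_smul_le hv ψ (fun k ↦ (a k : 𝕜)) s t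
            fun k _ ↦ (RCLike.norm_ofReal (a k)).trans_le (a_le_two k)
    _ ≤ ∑ k ∈ s, (K * ((Δτ * lam k) ^ 2 / 2)) ^ 2 * ‖inner 𝕜 (v k) ψ‖ ^ 2 + 2 ^ 2 * δ := by
        gcongr with k
        · exact a_le k
        · linarith
    _ = (K : ℝ) ^ 2 / 4 * Δτ ^ 4 * ∑ k ∈ s, lam k ^ 4 * ‖inner 𝕜 (v k) ψ‖ ^ 2 + 4 * δ := by
        rw [mul_sum]
        congr 1
        · exact sum_congr rfl fun k _ ↦ by ring
        · norm_num

end Orthonormal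

/-- Unnormalized error of `K` steps of the alternative approximate PITE versus the
exact imaginary-time evolution, in the eigenbasis of the Hamiltonian:
`‖Σ_k (cos(√(2Δτλ_k))^K − e^{−KΔτλ_k}) c_k ψ_k‖² ≤ (4K²/9)Δτ⁴ Σ_{k ≤ m} λ_k⁴|c_k|² + 4δ`. -/
theorem stmt_5 (N : ℕ) (hN : 1 ≤ N)
    (ψb : OrthonormalBasis (Fin N) ℂ (EuclideanSpace ℂ (Fin N)))
    (lam : Fin N → ℝ) (hlam : ∀ k, 0 ≤ lam k) (hmono : Monotone lam)
    (ψ : EuclideanSpace ℂ (Fin N)) (hψ : ‖ψ‖ = 1)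
    (c : Fin N → ℂ) (hc : ∀ k, c k = inner ℂ (ψb k) ψ)
    (K : ℕ) (Δτ : ℝ) (hΔτ : 0 < Δτ) (δ : ℝ) (hδ : δ ∈ Set.Ico (0:ℝ) 1)
    (m : Fin N) (hm : 1 - δ ≤ ∑ j ∈ Finset.Iic m, ‖c j‖ ^ 2) :
    ‖∑ k, ((((Real.cos (Real.sqrt (2 * Δτ * lam k))) ^ K
          - Real.exp (-(K * Δτ * lam k)) : ℝ) : ℂ) * c k) • ψb k‖ ^ 2
      ≤ (4 * (K : ℝ) ^ 2 / 9) * Δτ ^ 4 * ∑ k ∈ Finset.Iic m, lam k ^ 4 * ‖c k‖ ^ 2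
        + 4 * δ := by
  obtain rfl : c = fun k ↦ inner ℂ (ψb k) ψ := funext hc
  exact (stmt_5_general ψb.orthonormal hlam ψ K hΔτ.le (by simpa [hψ] using hm) univ).trans
    (by gcongr ?_ * _ * _ + _; linarith [sq_nonneg (K : ℝ)])
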